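/- (Crofton's formula on the sphere) Let d ≥ 2 and let γ : [0,1] → S^{d−1} ⊂ ℝ^d be a continuous curve on the unit sphere. Then the spherical length of γ equals π times the average number of intersections of γ with great hyperspheres: Len_S(γ) = π ∫_{S^{d−1}} #{t ∈ [0,1] : ⟨γ(t), v⟩ = 0} dσ(v), as an identity in [0,∞], where σ is the uniform (rotation-invariant) probability measure on S^{d−1} and # denotes cardinality valued in {0,1,2,…} ∪ {∞}. -/

import Mathlib

open Set Filter MeasureTheory
open scoped ENNReal NNReal RealInnerProductSpace

noncomputable section

/-- The parameters `u 0 < u 1 < ⋯ < u m` of a polygon inscribed in (the restriction to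
`[a,b]` of) a curve: strictly increasing parameters lying in `[a,b]`. -/
def InscribedIn (a b : ℝ) (m : ℕ) (u : ℕ → ℝ) : Prop :=
  (∀ i < m, u i < u (i + 1)) ∧ ∀ i ≤ m, u i ∈ Set.Icc a b

/-- The length of the polygon inscribed in the curve `γ` with parameters `u 0, …, u m`:
the sum of the euclidean lengths of its edges. -/
def polyLen {E : Type*} [NormedAddCommGroup E] (γ : ℝ → E) (m : ℕ) (u : ℕ → ℝ) : ℝ :=
  ∑ i ∈ Finset.range m, ‖γ (u (i + 1)) - γ (u i)‖

/-- The (Jordan) length of the arc `γ : [a,b] → E`: the supremum of the lengths of all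
inscribed polygons, valued in `[0,∞]`. -/
def arcLen {E : Type*} [NormedAddCommGroup E] (γ : ℝ → E) (a b : ℝ) : ℝ≥0∞ :=
  ⨆ (m : ℕ) (u : ℕ → ℝ) (_ : InscribedIn a b m u), ENNReal.ofReal (polyLen γ m u)

/-- The list of vertices of the polygon inscribed in `γ` with parameters `u 0, …, u m`. -/
def vertexList {E : Type*} (γ : ℝ → E) (m : ℕ) (u : ℕ → ℝ) : List E :=
  (List.range (m + 1)).map fun i => γ (u i)

/-- Collapse consecutive equal entries of a list to single entries. -/
def collapse {E : Type*} (l : List E) : List E :=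
  @List.destutter E (· ≠ ·) (Classical.decRel _) l

/-- The sum of the turning angles of a polygon given by its list of vertices: at each
interior vertex, the angle in `[0,π]` between the incoming and outgoing edge vectors. -/
def turnSum {E : Type*} [NormedAddCommGroup E] [InnerProductSpace ℝ E] : List E → ℝ
  | a :: b :: c :: l => InnerProductGeometry.angle (b - a) (c - b) + turnSum (b :: c :: l)
  | _ => 0

/-- The sum, at each interior vertex, of the euclidean distance `‖u₊ - u₋‖` between the
unit tangent vectors of the incoming and outgoing edges (so a corner of turning angle θ
contributes `2 sin(θ/2)`). -/
def starSum {E : Type*} [NormedAddCommGroup E] [InnerProductSpace ℝ E] : List E → ℝ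
  | a :: b :: c :: l =>
      ‖(‖c - b‖⁻¹ • (c - b)) - (‖b - a‖⁻¹ • (b - a))‖ + starSum (b :: c :: l)
  | _ => 0

/-- The total curvature of the polygon inscribed in `γ` with parameters `u 0, …, u m`:
after collapsing consecutive equal vertices, the sum of its turning angles. -/
def polyTC {E : Type*} [NormedAddCommGroup E] [InnerProductSpace ℝ E]
    (γ : ℝ → E) (m : ℕ) (u : ℕ → ℝ) : ℝ :=
  turnSum (collapse (vertexList γ m u))

/-- The total curvature of the arc `γ : [a,b] → E`: the supremum over all inscribed
polygons of their total curvature, valued in `[0,∞]`. -/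
def arcTC {E : Type*} [NormedAddCommGroup E] [InnerProductSpace ℝ E]
    (γ : ℝ → E) (a b : ℝ) : ℝ≥0∞ :=
  ⨆ (m : ℕ) (u : ℕ → ℝ) (_ : InscribedIn a b m u), ENNReal.ofReal (polyTC γ m u)

/-- The euclidean total curvature `TC*` of the polygon inscribed in `γ` with parameters
`u 0, …, u m`. -/
def polyTCStar {E : Type*} [NormedAddCommGroup E] [InnerProductSpace ℝ E]
    (γ : ℝ → E) (m : ℕ) (u : ℕ → ℝ) : ℝ :=
  starSum (collapse (vertexList γ m u))

/-- The euclidean total curvature `TC*` of the arc `γ : [a,b] → E`. -/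
def arcTCStar {E : Type*} [NormedAddCommGroup E] [InnerProductSpace ℝ E]
    (γ : ℝ → E) (a b : ℝ) : ℝ≥0∞ :=
  ⨆ (m : ℕ) (u : ℕ → ℝ) (_ : InscribedIn a b m u), ENNReal.ofReal (polyTCStar γ m u)

/-- Cyclically ordered parameters `u 0 < ⋯ < u m` in `[0,1)` of a polygon inscribed in a
loop `γ : ℝ/ℤ → E`. -/
def LoopInscribed (m : ℕ) (u : ℕ → ℝ) : Prop :=
  (∀ i < m, u i < u (i + 1)) ∧ ∀ i ≤ m, u i ∈ Set.Ico (0 : ℝ) 1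

/-- The list of vertices of the polygon inscribed in the loop `γ` with parameters
`u 0, …, u m`. -/
def loopVertexList {E : Type*} (γ : AddCircle (1 : ℝ) → E) (m : ℕ) (u : ℕ → ℝ) : List E :=
  (List.range (m + 1)).map fun i => γ (u i : ℝ)

/-- The sum of the lengths of the successive edges of a list of points. -/
def lenList {E : Type*} [NormedAddCommGroup E] : List E → ℝ
  | a :: b :: l => ‖b - a‖ + lenList (b :: l)
  | _ => 0

/-- The length of the closed polygon inscribed in the loop `γ` with parameters
`u 0, …, u m`: the sum of the edge lengths, indices taken cyclically. -/
def loopPolyLen {E : Type*} [NormedAddCommGroup E]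
    (γ : AddCircle (1 : ℝ) → E) (m : ℕ) (u : ℕ → ℝ) : ℝ :=
  lenList (loopVertexList γ m u ++ (loopVertexList γ m u).take 1)

/-- The length of a loop `γ : ℝ/ℤ → E`: the supremum of the lengths of inscribed closed
polygons, valued in `[0,∞]`. -/
def loopLen {E : Type*} [NormedAddCommGroup E] (γ : AddCircle (1 : ℝ) → E) : ℝ≥0∞ :=
  ⨆ (m : ℕ) (u : ℕ → ℝ) (_ : LoopInscribed m u), ENNReal.ofReal (loopPolyLen γ m u)

open Classical in
/-- Collapse consecutive equal vertices of a *cyclic* list of vertices: collapse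
consecutive duplicates, also across the wrap-around. -/
def cyclicCollapse {E : Type*} (l : List E) : List E :=
  if 2 ≤ (collapse l).length ∧ (collapse l).getLast? = (collapse l).head? then
    (collapse l).dropLast
  else collapse l

/-- The total curvature of the closed polygon inscribed in the loop `γ` with parameters
`u 0, …, u m`: after cyclically collapsing consecutive equal vertices, the sum of the
turning angles at all of its vertices (every vertex of a closed polygon is interior). -/
def loopPolyTC {E : Type*} [NormedAddCommGroup E] [InnerProductSpace ℝ E]
    (γ : AddCircle (1 : ℝ) → E) (m : ℕ) (u : ℕ → ℝ) : ℝ :=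
  turnSum (cyclicCollapse (loopVertexList γ m u) ++
    (cyclicCollapse (loopVertexList γ m u)).take 2)

/-- The total curvature of a loop `γ : ℝ/ℤ → E`: the supremum over all inscribed closed
polygons of their total curvature, valued in `[0,∞]`. -/
def loopTC {E : Type*} [NormedAddCommGroup E] [InnerProductSpace ℝ E]
    (γ : AddCircle (1 : ℝ) → E) : ℝ≥0∞ :=
  ⨆ (m : ℕ) (u : ℕ → ℝ) (_ : LoopInscribed m u), ENNReal.ofReal (loopPolyTC γ m u)

/-- The euclidean total curvature `TC*` of the closed inscribed polygon. -/
def loopPolyTCStar {E : Type*} [NormedAddCommGroup E] [InnerProductSpace ℝ E]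
    (γ : AddCircle (1 : ℝ) → E) (m : ℕ) (u : ℕ → ℝ) : ℝ :=
  starSum (cyclicCollapse (loopVertexList γ m u) ++
    (cyclicCollapse (loopVertexList γ m u)).take 2)

/-- The euclidean total curvature `TC*` of a loop `γ : ℝ/ℤ → E`. -/
def loopTCStar {E : Type*} [NormedAddCommGroup E] [InnerProductSpace ℝ E]
    (γ : AddCircle (1 : ℝ) → E) : ℝ≥0∞ :=
  ⨆ (m : ℕ) (u : ℕ → ℝ) (_ : LoopInscribed m u), ENNReal.ofReal (loopPolyTCStar γ m u)

end

open scoped RealInnerProductSpace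

/-- The spherical length of the polygon inscribed in `γ` with parameters `u 0, …, u m`:
the sum of the geodesic (great-circle) distances between consecutive vertices. -/
noncomputable def sphPolyLen {d : ℕ} (γ : ℝ → EuclideanSpace ℝ (Fin d))
    (m : ℕ) (u : ℕ → ℝ) : ℝ :=
  ∑ i ∈ Finset.range m, Real.arccos ⟪γ (u i), γ (u (i + 1))⟫

/-- The spherical length of a curve `γ : [0,1] → S^{d-1}`: the supremum of the spherical
lengths of all inscribed polygons, valued in `[0,∞]`. -/
noncomputable def sphLen {d : ℕ} (γ : ℝ → EuclideanSpace ℝ (Fin d)) : ℝ≥0∞ :=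
  ⨆ (m : ℕ) (u : ℕ → ℝ) (_ : InscribedIn 0 1 m u), ENNReal.ofReal (sphPolyLen γ m u)

/-!
A direction `v` chosen uniformly on the sphere separates `a` from `b` with probability
`angle a b / π`: this probability depends only on the angle, and along a half great circle it is
additive and nonnegative, hence linear. Summing over the edges of an inscribed polygon, its angular
length is `π` times the mean number of sign changes of `⟪γ, v⟫` along its vertices.

By the intermediate value theorem there are at least as many zeros of `⟪γ, v⟫` as sign changes,
which gives one inequality. Conversely, if `⟪γ, v⟫` vanishes somewhere on a set without changing
sign there, then `±v` lies on the frontier of the dual cone of the image of that set; such frontiers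
are null, being cones which are Lebesgue null by convexity. Taking the countably many rational
intervals, almost surely every zero is a genuine crossing, so the sign changes on fine subdivisions
of `[0, 1]` detect any finite set of zeros, and Fatou's lemma gives the other inequality.
-/

section AdditiveOnInterval

theorem abs_le_div_two_pow_of_additive {g : ℝ → ℝ} {c M : ℝ}
    (hadd : ∀ x y, 0 ≤ x → 0 ≤ y → x + y ≤ c → g (x + y) = g x + g y) (hc : g c = 0)
    (hM : ∀ x ∈ Icc 0 c, |g x| ≤ M) (n : ℕ) : ∀ x ∈ Icc 0 c, |g x| ≤ M / 2 ^ n := by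
  induction n with
  | zero => simpa using hM
  | succ n ih =>
    rintro x ⟨hx₀, hxc⟩
    suffices h : ∃ y ∈ Icc 0 c, g y = 2 * g x by
      obtain ⟨y, hy, hyx⟩ := h
      have hbound := ih y hy
      rw [hyx, abs_mul, abs_two] at hbound
      rw [pow_succ, ← div_div]
      linarith
    rcases le_total (2 * x) c with h | h
    · refine ⟨x + x, ⟨by linarith, by linarith⟩, ?_⟩
      rw [hadd x x hx₀ hx₀ (by linarith), two_mul]
    · refine ⟨2 * x - c, ⟨by linarith, by linarith⟩, ?_⟩
      have h₁ := hadd x (c - x) hx₀ (by linarith) (by linarith)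
      have h₂ := hadd (2 * x - c) (c - x) (by linarith) (by linarith) (by linarith)
      rw [add_sub_cancel, hc] at h₁
      rw [show 2 * x - c + (c - x) = x by ring] at h₂
      linarith

theorem eq_div_mul_of_nonneg_of_additive {f : ℝ → ℝ} {c : ℝ} (hc : 0 < c)
    (hf : ∀ x ∈ Icc 0 c, 0 ≤ f x)
    (hadd : ∀ x y, 0 ≤ x → 0 ≤ y → x + y ≤ c → f (x + y) = f x + f y)
    {x : ℝ} (hx : x ∈ Icc 0 c) : f x = x / c * f c := by
  set g : ℝ → ℝ := fun x ↦ f x - x / c * f c with hg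
  have hg_bound : ∀ y ∈ Icc 0 c, |g y| ≤ f c := by
    rintro y ⟨hy₀, hyc⟩
    have hsplit := hadd y (c - y) hy₀ (by linarith) (by linarith)
    rw [add_sub_cancel] at hsplit
    have hfy := hf y ⟨hy₀, hyc⟩
    have hfcy := hf (c - y) ⟨by linarith, by linarith⟩
    have hr₀ : 0 ≤ y / c * f c := by have := hfy.trans (by linarith : f y ≤ f c); positivity
    have hr₁ : y / c * f c ≤ f c :=
      mul_le_of_le_one_left (by linarith) ((div_le_one hc).2 hyc)
    rw [abs_le]
    constructor <;> simp only [hg] <;> linarith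
  have hlim : Tendsto (fun n : ℕ ↦ f c / 2 ^ n) atTop (nhds 0) :=
    tendsto_const_nhds.div_atTop (tendsto_pow_atTop_atTop_of_one_lt one_lt_two)
  have hgx : |g x| ≤ 0 := ge_of_tendsto' hlim fun n ↦
    abs_le_div_two_pow_of_additive
      (fun x y hx hy hxy ↦ by simp only [hg, hadd x y hx hy hxy]; ring)
      (by simp [hg, hc.ne']) hg_bound n x hx
  exact sub_eq_zero.1 (abs_nonpos_iff.1 hgx)

end AdditiveOnInterval

section UniformMeasure

open scoped Pointwise

variable {E : Type*} [NormedAddCommGroup E] [InnerProductSpace ℝ E]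

theorem notMem_interior_innerDual [CompleteSpace E] {C : Set E} {s v : E} (hs : s ∈ C)
    (hs₀ : s ≠ 0) (hsv : ⟪s, v⟫ = 0) : v ∉ interior (ProperCone.innerDual C : Set E) := by
  intro hv
  have hmin : IsLocalMin (innerSL ℝ s) v := by
    filter_upwards [mem_interior_iff_mem_nhds.1 hv] with w hw
    simpa [hsv] using hw hs
  have hzero : innerSL ℝ s = 0 := hmin.hasFDerivAt_eq_zero (innerSL ℝ s).hasFDerivAt
  exact hs₀ (by simpa using congr($hzero s))

variable [MeasurableSpace E]

/-- The measure `σ` on `E` is carried by the unit sphere and invariant under all linear isometries.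
Together with `IsProbabilityMeasure σ` this characterizes the uniform measure of the sphere; it is
encoded as a measure on the ambient space. -/
structure IsUniformOnSphere (σ : Measure E) : Prop where
  ae_norm_eq_one : ∀ᵐ v ∂σ, ‖v‖ = 1
  map_eq (g : E ≃ₗᵢ[ℝ] E) : σ.map g = σ

variable [BorelSpace E]

theorem charFun_eq_of_norm_eq {σ : Measure E} (hσ : ∀ g : E ≃ₗᵢ[ℝ] E, σ.map g = σ)
    {x y : E} (h : ‖x‖ = ‖y‖) : charFun σ x = charFun σ y := by
  set g : E ≃ₗᵢ[ℝ] E := (ℝ ∙ (x - y))ᗮ.reflection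
  have hxy : g x = y := Submodule.reflection_sub h
  have hcont : Continuous fun v ↦ Complex.exp (⟪v, y⟫ * Complex.I) := by fun_prop
  calc charFun σ x = ∫ v, Complex.exp (⟪g v, g x⟫ * Complex.I) ∂σ := by
        simp only [charFun_apply, LinearIsometryEquiv.inner_map_map]
    _ = ∫ v, Complex.exp (⟪v, y⟫ * Complex.I) ∂σ.map g := by
        rw [hxy, integral_map g.continuous.aemeasurable hcont.aestronglyMeasurable]
    _ = charFun σ y := by rw [hσ g, charFun_apply]

namespace IsUniformOnSphere

variable {σ ν : Measure E} [IsProbabilityMeasure ν]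

theorem integral_charFun_norm_smul (hσ : IsUniformOnSphere σ) (hν : IsUniformOnSphere ν) (x : E) :
    ∫ y, charFun σ (‖x‖ • y) ∂ν = charFun σ x := by
  have hconst : (fun y ↦ charFun σ (‖x‖ • y)) =ᵐ[ν] fun _ ↦ charFun σ x := by
    filter_upwards [hν.ae_norm_eq_one] with y hy
    exact charFun_eq_of_norm_eq hσ.map_eq (by simp [norm_smul, hy])
  rw [integral_congr_ae hconst]
  simp

theorem unique [FiniteDimensional ℝ E] [IsProbabilityMeasure σ]
    (hσ : IsUniformOnSphere σ) (hν : IsUniformOnSphere ν) :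
    σ = ν := by
  -- The characteristic functions are radial, so each may be averaged over the other measure, and
  -- Fubini identifies the two averages.
  refine Measure.ext_of_charFun (funext fun x ↦ ?_)
  have hint : Integrable (Function.uncurry fun y v : E ↦
      Complex.exp (⟪v, ‖x‖ • y⟫ * Complex.I)) (ν.prod σ) :=
    .of_bound (by fun_prop : Continuous _).aestronglyMeasurable 1
      (.of_forall fun p ↦ (Complex.norm_exp_ofReal_mul_I _).le)
  calc charFun σ x = ∫ y, charFun σ (‖x‖ • y) ∂ν := (integral_charFun_norm_smul hσ hν x).symm
    _ = ∫ v, ∫ y, Complex.exp (⟪v, ‖x‖ • y⟫ * Complex.I) ∂ν ∂σ := by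
        simp only [charFun_apply]
        exact integral_integral_swap hint
    _ = ∫ v, charFun ν (‖x‖ • v) ∂σ := by
        simp only [charFun_apply, inner_smul_right, real_inner_comm]
    _ = charFun ν x := integral_charFun_norm_smul hν hσ x

end IsUniformOnSphere

variable [FiniteDimensional ℝ E]

variable (E) in
/-- The radial projection to the unit sphere of the uniform measure on the unit ball: a concrete
uniform measure of the sphere, in which the null cones can be read off from Lebesgue measure. -/
noncomputable def projectedBallMeasure : Measure E :=
  (ProbabilityTheory.cond volume (Metric.ball (0 : E) 1)).map NormedSpace.normalize

theorem measurable_normalize : Measurable (NormedSpace.normalize : E → E) := by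
  unfold NormedSpace.normalize
  fun_prop

theorem map_cond_ball (g : E ≃ₗᵢ[ℝ] E) :
    (ProbabilityTheory.cond volume (Metric.ball (0 : E) 1)).map g =
      ProbabilityTheory.cond volume (Metric.ball (0 : E) 1) := by
  have hball : g ⁻¹' Metric.ball 0 1 = Metric.ball 0 1 := by ext; simp
  have hrestrict := (g.measurePreserving.restrict_preimage
    (s := Metric.ball 0 1) measurableSet_ball).map_eq
  rw [hball] at hrestrict
  rw [ProbabilityTheory.cond, Measure.map_smul, hrestrict]

instance : IsProbabilityMeasure (projectedBallMeasure E) := by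
  have := ProbabilityTheory.cond_isProbabilityMeasure_of_finite
    (Metric.measure_ball_pos (volume : Measure E) 0 one_pos).ne' measure_ball_lt_top.ne
  exact Measure.isProbabilityMeasure_map measurable_normalize.aemeasurable

theorem isUniformOnSphere_projectedBallMeasure [Nontrivial E] :
    IsUniformOnSphere (projectedBallMeasure E) where
  ae_norm_eq_one := by
    rw [projectedBallMeasure, ae_map_iff measurable_normalize.aemeasurable
      (measurableSet_eq_fun measurable_norm measurable_const)]
    filter_upwards [ProbabilityTheory.cond_absolutelyContinuous.ae_le
      (Measure.ae_ne (volume : Measure E) 0)] with x hx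
    exact NormedSpace.norm_normalize hx
  map_eq g := by
    have hg := g.continuous.measurable
    have hcomm : g ∘ NormedSpace.normalize = NormedSpace.normalize ∘ g := by
      ext x; simp [NormedSpace.normalize]
    rw [projectedBallMeasure, Measure.map_map hg measurable_normalize, hcomm,
      ← Measure.map_map measurable_normalize hg, map_cond_ball]

namespace IsUniformOnSphere

variable [Nontrivial E] {σ : Measure E} [IsProbabilityMeasure σ]

theorem measure_eq_zero_of_cone (hσ : IsUniformOnSphere σ) {A : Set E} (hA : MeasurableSet A)
    (hcone : ∀ r : ℝ, 0 < r → r • A = A) (hA₀ : volume A = 0) : σ A = 0 := by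
  rw [hσ.unique isUniformOnSphere_projectedBallMeasure, projectedBallMeasure,
    Measure.map_apply measurable_normalize hA]
  have hsub : NormedSpace.normalize ⁻¹' A ⊆ A ∪ {0} := by
    intro x hx
    rcases eq_or_ne x 0 with rfl | hx₀
    · simp
    · left
      have hmem : ‖x‖ • NormedSpace.normalize x ∈ ‖x‖ • A := smul_mem_smul_set hx
      rwa [NormedSpace.norm_smul_normalize, hcone ‖x‖ (norm_pos_iff.2 hx₀)] at hmem
  exact measure_mono_null hsub (ProbabilityTheory.cond_absolutelyContinuous
    (measure_union_null hA₀ (measure_singleton 0)))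

theorem measure_frontier_properCone (hσ : IsUniformOnSphere σ) (K : ProperCone ℝ E) :
    σ (frontier (K : Set E)) = 0 := by
  refine hσ.measure_eq_zero_of_cone isClosed_frontier.measurableSet (fun r hr ↦ ?_)
    (K.convex.addHaar_frontier _)
  have hK : r • (K : Set E) = K := by
    ext x
    rw [mem_smul_set_iff_inv_smul_mem₀ hr.ne']
    exact ⟨fun h ↦ by simpa [hr.ne'] using K.smul_mem h hr.le,
      fun h ↦ K.smul_mem h (inv_nonneg.2 hr.le)⟩
  rw [frontier, smul_set_sdiff₀ hr.ne', ← closure_smul₀, ← interior_smul₀ hr.ne', hK]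

theorem ae_not_isLeast_image_inner (hσ : IsUniformOnSphere σ) {C : Set E} (hC : 0 ∉ C) :
    ∀ᵐ v ∂σ, ¬ IsLeast ((fun s ↦ ⟪s, v⟫) '' C) 0 := by
  filter_upwards [measure_eq_zero_iff_ae_notMem.1
    (hσ.measure_frontier_properCone (ProperCone.innerDual C))] with v hv
  rintro ⟨⟨s, hs, hsv⟩, hnonneg⟩
  exact hv ⟨subset_closure fun x hx ↦ hnonneg (mem_image_of_mem _ hx),
    notMem_interior_innerDual hs (ne_of_mem_of_not_mem hs hC) hsv⟩

theorem ae_inner_ne_zero (hσ : IsUniformOnSphere σ) {a : E} (ha : a ≠ 0) :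
    ∀ᵐ v ∂σ, ⟪a, v⟫ ≠ 0 := by
  filter_upwards [hσ.ae_not_isLeast_image_inner (C := {a}) (by simpa using ha.symm)] with v hv hav
  simp [hav] at hv

end IsUniformOnSphere

end UniformMeasure

section Separating

variable {E : Type*} [NormedAddCommGroup E] [InnerProductSpace ℝ E]

/-- The directions `v` whose orthogonal hyperplane strictly separates `a` from `b`. -/
def separating (a b : E) : Set E :=
  {v | ⟪a, v⟫ * ⟪b, v⟫ < 0}

theorem measurableSet_separating [MeasurableSpace E] [OpensMeasurableSpace E] (a b : E) :
    MeasurableSet (separating a b) :=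
  (isOpen_lt (by fun_prop) continuous_const).measurableSet

theorem separating_self (a : E) : separating a a = ∅ :=
  eq_empty_of_forall_notMem fun v ↦ (mul_self_nonneg ⟪a, v⟫).not_gt

theorem separating_smul_smul {r s : ℝ} (hr : 0 < r) (hs : 0 < s) (a b : E) :
    separating (r • a) (s • b) = separating a b := by
  ext v
  simp only [separating, mem_ofPred_eq, real_inner_smul_left, mul_mul_mul_comm r]
  exact smul_neg_iff_of_pos_left (mul_pos hr hs)

theorem exists_linearIsometryEquiv_apply_eq {a b a' b' : E} (ha : ‖a‖ = ‖a'‖) (hb : ‖b‖ = ‖b'‖)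
    (hab : ⟪a, b⟫ = ⟪a', b'⟫) : ∃ g : E ≃ₗᵢ[ℝ] E, g a = a' ∧ g b = b' := by
  set g₁ : E ≃ₗᵢ[ℝ] E := (ℝ ∙ (a - a'))ᗮ.reflection
  have hg₁ : g₁ a = a' := Submodule.reflection_sub ha
  set g₂ : E ≃ₗᵢ[ℝ] E := (ℝ ∙ (g₁ b - b'))ᗮ.reflection
  have hfix : g₂ a' = a' := by
    refine Submodule.reflection_mem_subspace_eq_self ?_
    rw [Submodule.mem_orthogonal_singleton_iff_inner_left, inner_sub_right, ← hab, ← hg₁,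
      LinearIsometryEquiv.inner_map_map, sub_self]
  refine ⟨g₁.trans g₂, ?_, ?_⟩
  · rw [LinearIsometryEquiv.trans_apply, hg₁, hfix]
  · exact Submodule.reflection_sub (by rwa [LinearIsometryEquiv.norm_map])

/-- The parametrization by arc length of the great circle through the orthonormal pair `e`, `f`,
starting at `e` in the direction `f`. -/
noncomputable def greatCircle (e f : E) (φ : ℝ) : E :=
  Real.cos φ • e + Real.sin φ • f

theorem greatCircle_zero (e f : E) : greatCircle e f 0 = e := by
  simp [greatCircle]

theorem greatCircle_pi (e f : E) : greatCircle e f Real.pi = -e := by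
  simp [greatCircle]

theorem sin_add_smul_greatCircle (e f : E) (s t : ℝ) :
    Real.sin (s + t) • greatCircle e f s =
      Real.sin t • e + Real.sin s • greatCircle e f (s + t) := by
  have hcoeff : Real.sin (s + t) * Real.cos s = Real.sin t + Real.sin s * Real.cos (s + t) := by
    rw [Real.sin_add, Real.cos_add]
    linear_combination Real.sin t * Real.sin_sq_add_cos_sq s
  simp only [greatCircle, smul_add, smul_smul, hcoeff]
  module

theorem inner_left_greatCircle {e f : E} (he : ‖e‖ = 1) (hef : ⟪e, f⟫ = 0) (t : ℝ) :
    ⟪e, greatCircle e f t⟫ = Real.cos t := by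
  simp [greatCircle, inner_add_right, real_inner_smul_right, he, hef]

section Orthonormal

variable {e f : E} (he : ‖e‖ = 1) (hf : ‖f‖ = 1) (hef : ⟪e, f⟫ = 0)
include he hf hef

theorem inner_greatCircle (s t : ℝ) :
    ⟪greatCircle e f s, greatCircle e f t⟫ = Real.cos (s - t) := by
  have hfe : ⟪f, e⟫ = 0 := by rw [real_inner_comm, hef]
  simp only [greatCircle, inner_add_left, inner_add_right, real_inner_smul_left,
    real_inner_smul_right, real_inner_self_eq_norm_sq, he, hf, hef, hfe, Real.cos_sub]
  ring

theorem norm_greatCircle (t : ℝ) : ‖greatCircle e f t‖ = 1 := by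
  have hsq : ‖greatCircle e f t‖ ^ 2 = 1 := by
    rw [← real_inner_self_eq_norm_sq, inner_greatCircle he hf hef, sub_self, Real.cos_zero]
  exact (pow_eq_one_iff_of_nonneg (norm_nonneg _) two_ne_zero).1 hsq

theorem greatCircle_ne_zero (t : ℝ) : greatCircle e f t ≠ 0 :=
  norm_ne_zero_iff.1 (by simp [norm_greatCircle he hf hef])

end Orthonormal

end Separating

theorem not_mul_neg_and_mul_neg_of_mul_eq_add {x y z p q r : ℝ} (hp : 0 < p) (hq : 0 < q)
    (hr : 0 ≤ r) (h : r * y = p * x + q * z) : ¬(x * y < 0 ∧ y * z < 0) := by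
  rintro ⟨hxy, hyz⟩
  have hsplit : r * (y * y) = p * (x * y) + q * (y * z) := by linear_combination y * h
  have := mul_nonneg hr (mul_self_nonneg y)
  have := mul_neg_of_pos_of_neg hp hxy
  have := mul_neg_of_pos_of_neg hq hyz
  linarith

theorem mul_neg_iff_or_of_not_and {x y z : ℝ} (hx : x ≠ 0) (hy : y ≠ 0) (hz : z ≠ 0)
    (h : ¬(x * y < 0 ∧ y * z < 0)) : x * z < 0 ↔ x * y < 0 ∨ y * z < 0 := by
  have hxy := mul_ne_zero hx hy
  have hyz := mul_ne_zero hy hz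
  calc x * z < 0 ↔ y * y * (x * z) < 0 := (smul_neg_iff_of_pos_left (mul_self_pos.2 hy)).symm
    _ ↔ x * y * (y * z) < 0 := by rw [show y * y * (x * z) = x * y * (y * z) by ring]
    _ ↔ x * y < 0 ∨ y * z < 0 := by rw [mul_neg_iff]; grind

namespace IsUniformOnSphere

variable {E : Type*} [NormedAddCommGroup E] [InnerProductSpace ℝ E] [MeasurableSpace E]
  [BorelSpace E] {σ : Measure E}

theorem measure_separating_eq_of_inner_eq (hσ : IsUniformOnSphere σ) {a b a' b' : E}
    (ha : ‖a‖ = ‖a'‖) (hb : ‖b‖ = ‖b'‖) (hab : ⟪a, b⟫ = ⟪a', b'⟫) :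
    σ (separating a b) = σ (separating a' b') := by
  obtain ⟨g, rfl, rfl⟩ := exists_linearIsometryEquiv_apply_eq ha hb hab
  have hpreimage : g ⁻¹' separating (g a) (g b) = separating a b := by
    simp [separating, LinearIsometryEquiv.inner_map_map]
  conv_rhs => rw [← hσ.map_eq g]
  rw [Measure.map_apply g.continuous.measurable (measurableSet_separating _ _), hpreimage]

variable [FiniteDimensional ℝ E] [Nontrivial E] [IsProbabilityMeasure σ]

theorem measure_separating_neg (hσ : IsUniformOnSphere σ) {a : E} (ha : a ≠ 0) :
    σ (separating a (-a)) = 1 := by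
  refine (prob_compl_eq_zero_iff (measurableSet_separating _ _)).1 ?_
  filter_upwards [hσ.ae_inner_ne_zero ha] with v hv
  simpa [separating] using hv

theorem measureReal_separating_add (hσ : IsUniformOnSphere σ) {a b c : E} (ha : a ≠ 0)
    (hb : b ≠ 0) (hc : c ≠ 0) {p q r : ℝ} (hp : 0 < p) (hq : 0 < q) (hr : 0 ≤ r)
    (h : r • b = p • a + q • c) :
    σ.real (separating a c) = σ.real (separating a b) + σ.real (separating b c) := by
  have hinner (v : E) : r * ⟪b, v⟫ = p * ⟪a, v⟫ + q * ⟪c, v⟫ := by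
    simpa only [inner_add_left, real_inner_smul_left] using congr(⟪$h, v⟫)
  have hunion : separating a c =ᵐ[σ] (separating a b ∪ separating b c : Set E) := by
    filter_upwards [hσ.ae_inner_ne_zero ha, hσ.ae_inner_ne_zero hb, hσ.ae_inner_ne_zero hc]
      with v hav hbv hcv
    exact propext (mul_neg_iff_or_of_not_and hav hbv hcv
      (not_mul_neg_and_mul_neg_of_mul_eq_add hp hq hr (hinner v)))
  have hdisj : Disjoint (separating a b) (separating b c) :=
    Set.disjoint_left.2 fun v hab hbc ↦
      not_mul_neg_and_mul_neg_of_mul_eq_add hp hq hr (hinner v) ⟨hab, hbc⟩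
  rw [measureReal_congr hunion, measureReal_union hdisj (measurableSet_separating b c)]

theorem measureReal_separating_greatCircle (hσ : IsUniformOnSphere σ) {e f : E} (he : ‖e‖ = 1)
    (hf : ‖f‖ = 1) (hef : ⟪e, f⟫ = 0) {θ : ℝ} (hθ : θ ∈ Icc 0 Real.pi) :
    σ.real (separating e (greatCircle e f θ)) = θ / Real.pi := by
  have hne := greatCircle_ne_zero he hf hef
  have he₀ : e ≠ 0 := by simpa [greatCircle_zero] using hne 0
  set G : ℝ → ℝ := fun t ↦ σ.real (separating e (greatCircle e f t)) with hG
  have hG₀ : G 0 = 0 := by simp [hG, greatCircle_zero, separating_self]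
  have hGπ : G Real.pi = 1 := by
    simp [hG, greatCircle_pi, measureReal_def, hσ.measure_separating_neg he₀]
  have hshift (s t : ℝ) :
      σ.real (separating (greatCircle e f s) (greatCircle e f (s + t))) = G t := by
    refine congrArg ENNReal.toReal (hσ.measure_separating_eq_of_inner_eq ?_ ?_ ?_)
    · rw [norm_greatCircle he hf hef, he]
    · simp only [norm_greatCircle he hf hef]
    · rw [inner_greatCircle he hf hef, inner_left_greatCircle he hef, sub_add_cancel_left,
        Real.cos_neg]
  have hadd (s t : ℝ) (hs : 0 ≤ s) (ht : 0 ≤ t) (hst : s + t ≤ Real.pi) :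
      G (s + t) = G s + G t := by
    rcases hs.eq_or_lt with rfl | hs
    · simp [hG₀]
    rcases ht.eq_or_lt with rfl | ht
    · simp [hG₀]
    rw [← hshift s t]
    exact hσ.measureReal_separating_add he₀ (hne s) (hne _)
      (Real.sin_pos_of_pos_of_lt_pi ht (by linarith))
      (Real.sin_pos_of_pos_of_lt_pi hs (by linarith))
      (Real.sin_nonneg_of_nonneg_of_le_pi (by linarith) hst) (sin_add_smul_greatCircle e f s t)
  have hlinear : G θ = θ / Real.pi * G Real.pi :=
    eq_div_mul_of_nonneg_of_additive (f := G) Real.pi_pos (fun _ _ ↦ measureReal_nonneg) hadd hθ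
  rwa [hGπ, mul_one] at hlinear

theorem measure_separating_of_norm_eq_one (hσ : IsUniformOnSphere σ) {a b : E} (ha : ‖a‖ = 1)
    (hb : ‖b‖ = 1) :
    σ (separating a b) = ENNReal.ofReal (InnerProductGeometry.angle a b / Real.pi) := by
  have ha₀ : a ≠ 0 := norm_ne_zero_iff.1 (by simp [ha])
  have hb₀ : b ≠ 0 := norm_ne_zero_iff.1 (by simp [hb])
  rcases eq_or_ne (ℝ ∙ a)ᗮ ⊥ with hbot | hbot
  · have hmem : b ∈ ℝ ∙ a := by
      rw [Submodule.orthogonal_eq_bot_iff.1 hbot]; trivial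
    obtain ⟨r, rfl⟩ := Submodule.mem_span_singleton.1 hmem
    have hr : |r| = 1 := by simpa [norm_smul, ha] using hb
    rcases eq_or_eq_neg_of_abs_eq hr with rfl | rfl
    · simp [separating_self, InnerProductGeometry.angle_self ha₀]
    · simp [hσ.measure_separating_neg ha₀, InnerProductGeometry.angle_self_neg_of_nonzero ha₀,
        Real.pi_ne_zero]
  · obtain ⟨x, hx, hx₀⟩ := Submodule.exists_mem_ne_zero_of_ne_bot hbot
    rw [Submodule.mem_orthogonal_singleton_iff_inner_right] at hx
    set f := NormedSpace.normalize x
    have hf : ‖f‖ = 1 := NormedSpace.norm_normalize hx₀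
    have haf : ⟪a, f⟫ = 0 := by simp [f, NormedSpace.normalize, real_inner_smul_right, hx]
    have hinner : ⟪a, b⟫ = ⟪a, greatCircle a f (InnerProductGeometry.angle a b)⟫ := by
      rw [inner_left_greatCircle ha haf, InnerProductGeometry.cos_angle, ha, hb, one_mul,
        div_one]
    rw [hσ.measure_separating_eq_of_inner_eq rfl
        (hb.trans (norm_greatCircle ha hf haf _).symm) hinner, ← ofReal_measureReal,
      hσ.measureReal_separating_greatCircle ha hf haf
        ⟨InnerProductGeometry.angle_nonneg a b, InnerProductGeometry.angle_le_pi a b⟩]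

theorem measure_separating (hσ : IsUniformOnSphere σ) {a b : E} (ha : a ≠ 0) (hb : b ≠ 0) :
    σ (separating a b) = ENNReal.ofReal (InnerProductGeometry.angle a b / Real.pi) := by
  have ha' : 0 < ‖a‖⁻¹ := inv_pos.2 (norm_pos_iff.2 ha)
  have hb' : 0 < ‖b‖⁻¹ := inv_pos.2 (norm_pos_iff.2 hb)
  rw [← separating_smul_smul ha' hb', ← InnerProductGeometry.angle_smul_left_of_pos a b ha',
    ← InnerProductGeometry.angle_smul_right_of_pos _ b hb']
  exact hσ.measure_separating_of_norm_eq_one (NormedSpace.norm_normalize ha)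
    (NormedSpace.norm_normalize hb)

end IsUniformOnSphere

section SignChanges

/-- The number of sign changes between consecutive terms of `x 0, …, x m`; a vanishing term hides
the sign changes next to it. -/
noncomputable def signChanges (x : ℕ → ℝ) (m : ℕ) : ℕ :=
  (Finset.range m).filter (fun i ↦ x i * x (i + 1) < 0) |>.card

namespace InscribedIn

theorem monotoneOn {a b : ℝ} {m : ℕ} {u : ℕ → ℝ} (hu : InscribedIn a b m u) :
    MonotoneOn u (Iic m) :=
  monotoneOn_of_le_add_one ordConnected_Iic fun i _ _ hi ↦ (hu.1 i hi).le

theorem exists_zero_of_mul_neg {a b : ℝ} {m : ℕ} {u : ℕ → ℝ} (hu : InscribedIn a b m u)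
    {f : ℝ → ℝ} (hf : ContinuousOn f (Icc a b)) {i : ℕ} (hi : i < m)
    (h : f (u i) * f (u (i + 1)) < 0) : ∃ z ∈ Ioo (u i) (u (i + 1)), f z = 0 := by
  have hf' : ContinuousOn f (Icc (u i) (u (i + 1))) :=
    hf.mono (Icc_subset_Icc (hu.2 i hi.le).1 (hu.2 (i + 1) hi).2)
  rcases mul_neg_iff.1 h with ⟨hpos, hneg⟩ | ⟨hneg, hpos⟩
  · exact intermediate_value_Ioo' (hu.1 i hi).le hf' ⟨hneg, hpos⟩
  · exact intermediate_value_Ioo (hu.1 i hi).le hf' ⟨hneg, hpos⟩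

theorem signChanges_le_encard_zeros {a b : ℝ} {m : ℕ} {u : ℕ → ℝ} (hu : InscribedIn a b m u)
    {f : ℝ → ℝ} (hf : ContinuousOn f (Icc a b)) :
    (signChanges (f ∘ u) m : ℕ∞) ≤ {t ∈ Icc a b | f t = 0}.encard := by
  have hzero (i : ℕ) : ∃ z, i < m ∧ f (u i) * f (u (i + 1)) < 0 →
      z ∈ Ioo (u i) (u (i + 1)) ∧ f z = 0 := by
    by_cases h : i < m ∧ f (u i) * f (u (i + 1)) < 0
    · exact (hu.exists_zero_of_mul_neg hf h.1 h.2).imp fun _ hz _ ↦ hz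
    · exact ⟨0, fun h' ↦ absurd h' h⟩
  choose z hz using hzero
  rw [signChanges, ← encard_coe_eq_coe_finsetCard, Finset.coe_filter]
  simp only [Finset.mem_range, Function.comp_apply]
  refine encard_le_encard_of_injOn (f := z) (fun i hi ↦ ?_) fun i hi j hj hij ↦ ?_
  · obtain ⟨⟨hleft, hright⟩, hfz⟩ := hz i hi
    exact ⟨⟨(hu.2 i hi.1.le).1.trans hleft.le, hright.le.trans (hu.2 (i + 1) hi.1).2⟩, hfz⟩
  · have hlt {i j : ℕ} (hij : i < j) (hi : i ∈ {i | i < m ∧ f (u i) * f (u (i + 1)) < 0})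
        (hj : j ∈ {i | i < m ∧ f (u i) * f (u (i + 1)) < 0}) : z i < z j :=
      (hz i hi).1.2.trans_le <| (hu.monotoneOn hi.1 hj.1.le hij).trans (hz j hj).1.1.le
    rcases lt_trichotomy i j with h | h | h
    · exact absurd hij (hlt h hi hj).ne
    · exact h
    · exact absurd hij (hlt h hj hi).ne'

end InscribedIn

theorem mul_pos_of_mul_succ_nonneg {x : ℕ → ℝ} {a b : ℕ} (hab : a ≤ b)
    (hx : ∀ i ∈ Icc a b, x i ≠ 0) (h : ∀ i ∈ Ico a b, 0 ≤ x i * x (i + 1)) : 0 < x a * x b := by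
  induction b, hab using Nat.le_induction with
  | base => exact mul_self_pos.2 (hx a ⟨le_rfl, le_rfl⟩)
  | succ b hab ih =>
    have hxb : x b ≠ 0 := hx b ⟨hab, b.le_succ⟩
    have hstep : 0 < x b * x (b + 1) :=
      (h b ⟨hab, b.lt_succ_self⟩).lt_of_ne' (mul_ne_zero hxb (hx _ ⟨by lia, le_rfl⟩))
    have hprev : 0 < x a * x b :=
      ih (fun i hi ↦ hx i ⟨hi.1, hi.2.trans b.le_succ⟩)
        fun i hi ↦ h i ⟨hi.1, hi.2.trans b.lt_succ_self⟩
    refine (mul_pos_iff_of_pos_right (mul_self_pos.2 hxb)).1 ?_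
    linear_combination mul_pos hprev hstep

theorem exists_mul_succ_neg_of_mul_neg {x : ℕ → ℝ} {a b : ℕ} (hx : ∀ i ∈ uIcc a b, x i ≠ 0)
    (h : x a * x b < 0) : ∃ i ∈ uIcc a b, i + 1 ∈ uIcc a b ∧ x i * x (i + 1) < 0 := by
  wlog hab : a ≤ b generalizing a b
  · rw [uIcc_comm] at hx ⊢
    exact this hx (by rwa [mul_comm]) (le_of_not_ge hab)
  rw [uIcc_of_le hab] at hx ⊢
  by_contra! hnonneg
  exact h.not_gt <| mul_pos_of_mul_succ_nonneg hab hx fun i hi ↦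
    hnonneg i ⟨hi.1, hi.2.le⟩ ⟨hi.1.trans i.le_succ, hi.2⟩

/-- The `i`-th point of the subdivision of `[0, 1]` into `n` equal parts. -/
noncomputable def unitGrid (n i : ℕ) : ℝ :=
  i / n

theorem inscribedIn_unitGrid (n : ℕ) : InscribedIn 0 1 n (unitGrid n) := by
  refine ⟨fun i hi ↦ ?_, fun i hi ↦ ⟨by unfold unitGrid; positivity, ?_⟩⟩
  · have : (0 : ℝ) < n := by exact_mod_cast i.zero_le.trans_lt hi
    simp only [unitGrid]
    gcongr
    simp
  · exact div_le_one_of_le₀ (by exact_mod_cast hi) n.cast_nonneg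

theorem floor_mul_le {z : ℝ} (hz : z ∈ Icc 0 1) (n : ℕ) : ⌊z * n⌋₊ ≤ n :=
  Nat.floor_le_of_le (mul_le_of_le_one_left n.cast_nonneg hz.2)

theorem tendsto_unitGrid_floor {z : ℝ} (hz : z ∈ Icc 0 1) :
    Tendsto (fun n : ℕ ↦ unitGrid n ⌊z * n⌋₊) atTop (nhdsWithin z (Icc 0 1)) :=
  tendsto_nhdsWithin_iff.2
    ⟨(tendsto_nat_floor_mul_div_atTop hz.1).comp tendsto_natCast_atTop_atTop,
      .of_forall fun n ↦ (inscribedIn_unitGrid n).2 _ (floor_mul_le hz n)⟩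

/-- The zeros of `f` in `[0, 1]` are genuine crossings: `f` takes both signs near each of them,
and none of them is rational, so that they are avoided by all the points `unitGrid n i`. -/
structure CrossesAtZeros (f : ℝ → ℝ) : Prop where
  ne_zero_of_rat (q : ℚ) : (q : ℝ) ∈ Icc 0 1 → f q ≠ 0
  frequently_neg {t : ℝ} : t ∈ Icc 0 1 → f t = 0 → ∃ᶠ s in nhdsWithin t (Icc 0 1), f s < 0
  frequently_pos {t : ℝ} : t ∈ Icc 0 1 → f t = 0 → ∃ᶠ s in nhdsWithin t (Icc 0 1), 0 < f s

theorem frequently_neg_of_not_isLeast {f : ℝ → ℝ}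
    (hf : ∀ p q : ℚ, 0 ≤ p → q ≤ 1 → ¬IsLeast (f '' Icc (p : ℝ) q) 0) {t : ℝ}
    (ht : t ∈ Icc 0 1) (hft : f t = 0) : ∃ᶠ s in nhdsWithin t (Icc 0 1), f s < 0 := by
  have ht₀ : t ≠ 0 := fun h ↦ hf 0 0 le_rfl zero_le_one (by simp [← h, hft])
  have ht₁ : t ≠ 1 := fun h ↦ hf 1 1 zero_le_one le_rfl (by simp [← h, hft])
  have hmem : Icc 0 1 ∈ nhds t := Icc_mem_nhds (ht.1.lt_of_ne' ht₀) (ht.2.lt_of_ne ht₁)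
  rw [nhdsWithin_eq_nhds.2 hmem]
  intro hnonneg
  obtain ⟨l, u, htlu, hlu⟩ := mem_nhds_iff_exists_Ioo_subset.1 (hnonneg.and hmem)
  obtain ⟨p, hlp, hpt⟩ := exists_rat_btwn htlu.1
  obtain ⟨q, htq, hqu⟩ := exists_rat_btwn htlu.2
  have hpq : Icc (p : ℝ) q ⊆ {s | ¬f s < 0 ∧ s ∈ Icc 0 1} :=
    (Icc_subset_Ioo hlp hqu).trans hlu
  have hp : 0 ≤ p := by exact_mod_cast (hpq ⟨le_rfl, (hpt.trans htq).le⟩).2.1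
  have hq : q ≤ 1 := by exact_mod_cast (hpq ⟨(hpt.trans htq).le, le_rfl⟩).2.2
  refine hf p q hp hq ⟨⟨t, ⟨hpt.le, htq.le⟩, hft⟩, ?_⟩
  rintro _ ⟨s, hs, rfl⟩
  exact not_lt.1 (hpq hs).1

namespace CrossesAtZeros

variable {f : ℝ → ℝ}

theorem unitGrid_ne_zero (hf : CrossesAtZeros f) {n i : ℕ} (hi : i ≤ n) :
    f (unitGrid n i) ≠ 0 := by
  simpa [unitGrid] using hf.ne_zero_of_rat (i / n : ℚ)
    (by simpa [unitGrid] using (inscribedIn_unitGrid n).2 i hi)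

theorem eventually_exists_signChange_mem (hf : CrossesAtZeros f) (hcont : ContinuousOn f (Icc 0 1))
    {t : ℝ} (ht : t ∈ Icc 0 1) (hft : f t = 0) {U : Set ℝ} (hU : U ∈ nhds t) :
    ∀ᶠ n : ℕ in atTop,
      ∃ i < n, unitGrid n i ∈ U ∧ f (unitGrid n i) * f (unitGrid n (i + 1)) < 0 := by
  obtain ⟨ε, hε, hεU⟩ := Metric.mem_nhds_iff.1 hU
  have hball : ∀ᶠ s in nhdsWithin t (Icc 0 1), s ∈ Metric.ball t ε ∩ Icc 0 1 :=
    inter_mem (nhdsWithin_le_nhds (Metric.ball_mem_nhds t hε)) self_mem_nhdsWithin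
  obtain ⟨x, hfx, hxε, hx⟩ := ((hf.frequently_neg ht hft).and_eventually hball).exists
  obtain ⟨y, hfy, hyε, hy⟩ := ((hf.frequently_pos ht hft).and_eventually hball).exists
  have hlim {z : ℝ} (hzε : z ∈ Metric.ball t ε) (hz : z ∈ Icc 0 1) :
      ∀ᶠ n : ℕ in atTop, unitGrid n ⌊z * n⌋₊ ∈ Metric.ball t ε :=
    (tendsto_unitGrid_floor hz).eventually
      (nhdsWithin_le_nhds (Metric.isOpen_ball.mem_nhds hzε))
  filter_upwards [hlim hxε hx, hlim hyε hy,
    (tendsto_unitGrid_floor hx).eventually ((hcont x hx).eventually (Iio_mem_nhds hfx)),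
    (tendsto_unitGrid_floor hy).eventually ((hcont y hy).eventually (Ioi_mem_nhds hfy))]
    with n hxn hyn hfxn hfyn
  have hle : uIcc ⌊x * n⌋₊ ⌊y * n⌋₊ ⊆ Iic n :=
    ordConnected_Iic.uIcc_subset (floor_mul_le hx n) (floor_mul_le hy n)
  obtain ⟨i, hi, hi', hneg⟩ := exists_mul_succ_neg_of_mul_neg
    (fun i hi ↦ hf.unitGrid_ne_zero (hle hi)) (mul_neg_of_neg_of_pos hfxn hfyn)
  have hgrid := ((inscribedIn_unitGrid n).monotoneOn.mono hle).mapsTo_uIcc hi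
  exact ⟨i, hle hi', hεU ((convex_ball t ε).ordConnected.uIcc_subset hxn hyn hgrid), hneg⟩

theorem eventually_card_le_signChanges (hf : CrossesAtZeros f) (hcont : ContinuousOn f (Icc 0 1))
    {F : Finset ℝ} (hF : (F : Set ℝ) ⊆ {t ∈ Icc 0 1 | f t = 0}) :
    ∀ᶠ n : ℕ in atTop, F.card ≤ signChanges (f ∘ unitGrid n) n := by
  obtain ⟨U, hU, hdisj⟩ := F.finite_toSet.t2_separation
  have hloc : ∀ᶠ n : ℕ in atTop, ∀ t ∈ F,
      ∃ i < n, unitGrid n i ∈ U t ∧ f (unitGrid n i) * f (unitGrid n (i + 1)) < 0 :=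
    (Finset.eventually_all F).2 fun t ht ↦ hf.eventually_exists_signChange_mem hcont
      (hF ht).1 (hF ht).2 ((hU t).2.mem_nhds (hU t).1)
  filter_upwards [hloc] with n hn
  choose! i hi hiU hneg using hn
  refine Finset.card_le_card_of_injOn i (fun t ht ↦ ?_) fun s hs t ht hst ↦ ?_
  · simpa using ⟨hi t ht, hneg t ht⟩
  · exact hdisj.elim_set hs ht _ (hiU s hs) (hst ▸ hiU t ht)

theorem encard_zeros_le_liminf_signChanges (hf : CrossesAtZeros f)
    (hcont : ContinuousOn f (Icc 0 1)) :
    ({t ∈ Icc 0 1 | f t = 0}.encard : ℝ≥0∞) ≤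
      liminf (fun n ↦ (signChanges (f ∘ unitGrid n) n : ℝ≥0∞)) atTop := by
  rw [← ENNReal.tsum_set_one, ENNReal.tsum_eq_iSup_sum]
  refine iSup_le fun F ↦ le_liminf_of_le (by isBoundedDefault) ?_
  have hF : (F.map (.subtype _) : Set ℝ) ⊆ {t ∈ Icc 0 1 | f t = 0} := by
    rw [Finset.coe_map]
    exact Subtype.coe_image_subset _ _
  filter_upwards [hf.eventually_card_le_signChanges hcont hF] with n hn
  simpa using hn

end CrossesAtZeros

end SignChanges

section Crofton

variable {E : Type*} [NormedAddCommGroup E] [InnerProductSpace ℝ E]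

/-- The angular length of a curve `γ : [0,1] → E` avoiding the origin: the supremum over all
inscribed polygons of the sum of the angles under which the edges are seen from the origin. It is
the spherical length of the radial projection of `γ`. -/
noncomputable def angularLen (γ : ℝ → E) : ℝ≥0∞ :=
  ⨆ (m : ℕ) (u : ℕ → ℝ) (_ : InscribedIn 0 1 m u),
    ENNReal.ofReal (∑ i ∈ Finset.range m, InnerProductGeometry.angle (γ (u i)) (γ (u (i + 1))))

theorem natCast_signChanges_inner (x : ℕ → E) (m : ℕ) (v : E) :
    (signChanges (fun i ↦ ⟪x i, v⟫) m : ℝ≥0∞) =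
      ∑ i ∈ Finset.range m, (separating (x i) (x (i + 1))).indicator 1 v := by
  simp only [signChanges, Finset.card_filter, Nat.cast_sum, Nat.cast_ite, Nat.cast_one,
    Nat.cast_zero, indicator_apply, separating, mem_ofPred_eq, Pi.one_apply]

theorem measurable_signChanges_inner [MeasurableSpace E] [OpensMeasurableSpace E] (x : ℕ → E)
    (m : ℕ) : Measurable fun v ↦ (signChanges (fun i ↦ ⟪x i, v⟫) m : ℝ≥0∞) := by
  simp only [natCast_signChanges_inner]
  exact Finset.measurable_fun_sum _ fun i _ ↦
    measurable_one.indicator (measurableSet_separating _ _)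

namespace IsUniformOnSphere

variable [FiniteDimensional ℝ E] [Nontrivial E] [MeasurableSpace E] [BorelSpace E] {σ : Measure E}
  [IsProbabilityMeasure σ]

theorem pi_mul_lintegral_signChanges_inner (hσ : IsUniformOnSphere σ) {x : ℕ → E} {m : ℕ}
    (hx : ∀ i ≤ m, x i ≠ 0) :
    ENNReal.ofReal Real.pi * ∫⁻ v, signChanges (fun i ↦ ⟪x i, v⟫) m ∂σ =
      ENNReal.ofReal (∑ i ∈ Finset.range m, InnerProductGeometry.angle (x i) (x (i + 1))) := by
  simp only [natCast_signChanges_inner]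
  rw [lintegral_finsetSum _ fun i _ ↦ measurable_one.indicator (measurableSet_separating _ _),
    Finset.mul_sum, ENNReal.ofReal_sum_of_nonneg fun i _ ↦ InnerProductGeometry.angle_nonneg _ _]
  refine Finset.sum_congr rfl fun i hi ↦ ?_
  rw [Finset.mem_range] at hi
  rw [lintegral_indicator_one (measurableSet_separating _ _),
    hσ.measure_separating (hx i hi.le) (hx (i + 1) hi), ← ENNReal.ofReal_mul Real.pi_pos.le,
    mul_div_cancel₀ _ Real.pi_ne_zero]

theorem ae_crossesAtZeros (hσ : IsUniformOnSphere σ) {γ : ℝ → E}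
    (hγ : ∀ t ∈ Icc (0 : ℝ) 1, γ t ≠ 0) : ∀ᵐ v ∂σ, CrossesAtZeros fun t ↦ ⟪γ t, v⟫ := by
  have hnotLeast {δ : ℝ → E} (hδ : ∀ t ∈ Icc (0 : ℝ) 1, δ t ≠ 0) : ∀ᵐ v ∂σ, ∀ p q : ℚ, 0 ≤ p →
      q ≤ 1 → ¬IsLeast ((fun t ↦ ⟪δ t, v⟫) '' Icc (p : ℝ) q) 0 := by
    simp only [ae_all_iff]
    intro p q hp hq
    have hδ₀ : 0 ∉ δ '' Icc (p : ℝ) q := by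
      rintro ⟨t, ht, hδt⟩
      exact hδ t (Icc_subset_Icc (by exact_mod_cast hp) (by exact_mod_cast hq) ht) hδt
    simpa only [image_image] using hσ.ae_not_isLeast_image_inner hδ₀
  have hrat : ∀ᵐ v ∂σ, ∀ q : ℚ, (q : ℝ) ∈ Icc 0 1 → ⟪γ q, v⟫ ≠ 0 := by
    simp only [ae_all_iff]
    exact fun q hq ↦ hσ.ae_inner_ne_zero (hγ q hq)
  filter_upwards [hrat, hnotLeast hγ, hnotLeast (δ := fun t ↦ -γ t) (by simpa using hγ)]
    with v hv hpos hneg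
  refine ⟨hv, frequently_neg_of_not_isLeast hpos, fun ht hγt ↦ ?_⟩
  simpa using frequently_neg_of_not_isLeast hneg ht (by simpa using hγt)

theorem angularLen_le (hσ : IsUniformOnSphere σ) {γ : ℝ → E} (hγ : ContinuousOn γ (Icc 0 1))
    (hγ₀ : ∀ t ∈ Icc (0 : ℝ) 1, γ t ≠ 0) :
    angularLen γ ≤
      ENNReal.ofReal Real.pi * ∫⁻ v, ({t ∈ Icc (0 : ℝ) 1 | ⟪γ t, v⟫ = 0}.encard : ℝ≥0∞) ∂σ := by
  refine iSup_le fun m ↦ iSup₂_le fun u hu ↦ ?_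
  rw [← hσ.pi_mul_lintegral_signChanges_inner (x := fun i ↦ γ (u i)) fun i hi ↦ hγ₀ _ (hu.2 i hi)]
  gcongr with v
  exact_mod_cast hu.signChanges_le_encard_zeros (hγ.inner continuousOn_const)

theorem le_angularLen (hσ : IsUniformOnSphere σ) {γ : ℝ → E} (hγ : ContinuousOn γ (Icc 0 1))
    (hγ₀ : ∀ t ∈ Icc (0 : ℝ) 1, γ t ≠ 0) :
    ENNReal.ofReal Real.pi * ∫⁻ v, ({t ∈ Icc (0 : ℝ) 1 | ⟪γ t, v⟫ = 0}.encard : ℝ≥0∞) ∂σ ≤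
      angularLen γ := by
  have hgrid (n : ℕ) : ENNReal.ofReal Real.pi *
      ∫⁻ v, signChanges (fun i ↦ ⟪γ (unitGrid n i), v⟫) n ∂σ ≤ angularLen γ := by
    have hu := inscribedIn_unitGrid n
    rw [hσ.pi_mul_lintegral_signChanges_inner fun i hi ↦ hγ₀ _ (hu.2 i hi)]
    exact le_iSup_of_le n (le_iSup₂_of_le (unitGrid n) hu le_rfl)
  have hπ₀ : ENNReal.ofReal Real.pi ≠ 0 := by simp [Real.pi_pos]
  simp only [mul_comm (ENNReal.ofReal Real.pi),
    ← ENNReal.le_div_iff_mul_le (.inl hπ₀) (.inl ENNReal.ofReal_ne_top)] at hgrid ⊢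
  calc ∫⁻ v, ({t ∈ Icc (0 : ℝ) 1 | ⟪γ t, v⟫ = 0}.encard : ℝ≥0∞) ∂σ
    _ ≤ ∫⁻ v, liminf (fun n ↦ (signChanges (fun i ↦ ⟪γ (unitGrid n i), v⟫) n : ℝ≥0∞)) atTop ∂σ :=
        lintegral_mono_ae <| (hσ.ae_crossesAtZeros hγ₀).mono fun v hv ↦
          hv.encard_zeros_le_liminf_signChanges (hγ.inner continuousOn_const)
    _ ≤ liminf (fun n ↦ ∫⁻ v, signChanges (fun i ↦ ⟪γ (unitGrid n i), v⟫) n ∂σ) atTop :=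
        lintegral_liminf_le fun n ↦ measurable_signChanges_inner _ n
    _ ≤ angularLen γ / ENNReal.ofReal Real.pi :=
        liminf_le_of_le (by isBoundedDefault) fun b hb ↦
          let ⟨n, hn⟩ := hb.exists
          hn.trans (hgrid n)

end IsUniformOnSphere

end Crofton

theorem crofton_sphere_general {E : Type*} [NormedAddCommGroup E] [InnerProductSpace ℝ E]
    [FiniteDimensional ℝ E] [MeasurableSpace E] [BorelSpace E] {γ : ℝ → E}
    (hγ : ContinuousOn γ (Icc 0 1)) (hγ₀ : ∀ t ∈ Icc (0 : ℝ) 1, γ t ≠ 0) {σ : Measure E}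
    [IsProbabilityMeasure σ] (hσ : IsUniformOnSphere σ) :
    angularLen γ =
      ENNReal.ofReal Real.pi * ∫⁻ v, ({t ∈ Icc (0 : ℝ) 1 | ⟪γ t, v⟫ = 0}.encard : ℝ≥0∞) ∂σ :=
  have : Nontrivial E := nontrivial_of_ne _ _ (hγ₀ 0 (left_mem_Icc.2 zero_le_one))
  (hσ.angularLen_le hγ hγ₀).antisymm (hσ.le_angularLen hγ hγ₀)

theorem sphLen_eq_angularLen {d : ℕ} {γ : ℝ → EuclideanSpace ℝ (Fin d)}
    (hγ : ∀ t ∈ Icc (0 : ℝ) 1, ‖γ t‖ = 1) : sphLen γ = angularLen γ := by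
  refine iSup_congr fun m ↦ iSup_congr fun u ↦ iSup_congr fun hu ↦
    congrArg _ (Finset.sum_congr rfl fun i hi ↦ ?_)
  rw [Finset.mem_range] at hi
  simp [InnerProductGeometry.angle, hγ _ (hu.2 i hi.le), hγ _ (hu.2 (i + 1) hi)]

/-- Crofton's formula on the sphere: the spherical length of a continuous
curve on `S^{d-1}` equals `π` times the average number of its intersections with great
hyperspheres, the average taken with respect to the uniform (rotation-invariant)
probability measure `σ` on `S^{d-1}`. -/
theorem crofton_sphere (d : ℕ) (hd : 2 ≤ d) (γ : ℝ → EuclideanSpace ℝ (Fin d))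
    (hγ : ContinuousOn γ (Set.Icc 0 1)) (hsph : ∀ t ∈ Set.Icc (0 : ℝ) 1, ‖γ t‖ = 1)
    (σ : MeasureTheory.Measure (EuclideanSpace ℝ (Fin d)))
    [MeasureTheory.IsProbabilityMeasure σ]
    (hsupp : σ (Metric.sphere (0 : EuclideanSpace ℝ (Fin d)) 1)ᶜ = 0)
    (hinv : ∀ g : EuclideanSpace ℝ (Fin d) ≃ₗᵢ[ℝ] EuclideanSpace ℝ (Fin d),
      σ.map g = σ) :
    sphLen γ = ENNReal.ofReal Real.pi *
      ∫⁻ v, (({t ∈ Set.Icc (0 : ℝ) 1 | ⟪γ t, v⟫ = 0}).encard : ℝ≥0∞) ∂σ := by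
  have hσ : IsUniformOnSphere σ := by
    refine ⟨?_, hinv⟩
    filter_upwards [mem_ae_iff.2 hsupp] with v hv using mem_sphere_zero_iff_norm.1 hv
  have hγ₀ (t : ℝ) (ht : t ∈ Icc (0 : ℝ) 1) : γ t ≠ 0 := norm_ne_zero_iff.1 (by simp [hsph t ht])
  rw [sphLen_eq_angularLen hsph, crofton_sphere_general hγ hγ₀ hσ]
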